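/- Let 𝓑 be an admissible W-orbit of sets of mutually orthogonal positive roots, B ∈ 𝓑, and let i, j be nodes with i ∼ j. If B < r_i·B and B < r_j·B, then r_i·B < r_j r_i·B < r_i r_j r_i·B and r_j·B < r_i r_j·B < r_j r_i r_j·B. -/

import Mathlib

/-!
Since the simple root `α i` has height `1`, a root is positive exactly when its height is positive,
no root has height `0`, and `r i` permutes the positive roots other than `α i`.  Hence
(`lt_rAct_iff`) `B < r i · B` holds iff `α i ∉ B` and some `x ∈ B` with `⟪x, α i⟫ = -1` lies at
least two below every `β ∈ B` with `⟪β, α i⟫ = 1`.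

Suppose `i ∼ j` and both `r i` and `r j` raise `B`.  Then `α i + α j ∉ B`: it would be a lowered
element of height `2`, and nothing of height at most `0` is available to beat it.  So every
`β ∈ B` has `(⟪β, α i⟫, ⟪β, α j⟫)` among `(0, 0)`, `(±1, 0)`, `(0, ±1)`, `(1, -1)`, `(-1, 1)`.
The key point (`ht_gap`) is that for orthogonal roots `x`, `β` of types `(-1, 0)` and `(1, 0)` the
vectors `β - x - α i`, `β - x - α i - α j` and `β - x - 2 α i - α j` are all roots, so that
`ht β - ht x` is none of `1, 2, 3`: a gap of at least `2` is automatically at least `4`.  With this,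
the criterion for the sets `r i · B` and `r j r i · B`, expressed through `B` itself, follows by
comparing heights.
-/

open scoped InnerProductSpace

/-- A finite crystallographic simply laced root system `Φ` in a real inner
product space, normalized so that `⟪β, β⟫ = 2` for all roots, together with a
fixed base `α 1, …, α n` (the nodes of the diagram `M`), the corresponding set
`Pos` of positive roots, and the height linear functional `ht`. -/
structure SLRS (V : Type) [NormedAddCommGroup V] [InnerProductSpace ℝ V] where
  /-- the number of nodes of the diagram -/
  n : ℕ
  /-- the set of roots -/
  Φ : Set V
  /-- the set of positive roots -/
  Pos : Set V
  /-- the simple roots -/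
  α : Fin n → V
  /-- the height functional: heights are sums of coefficients on simple roots -/
  ht : V →ₗ[ℝ] ℝ
  finite : Φ.Finite
  pos_subset : Pos ⊆ Φ
  mem_pos_or_neg : ∀ β ∈ Φ, β ∈ Pos ∨ -β ∈ Pos
  not_pos_and_neg : ∀ β ∈ Pos, -β ∉ Pos
  alpha_pos : ∀ i, α i ∈ Pos
  norm_two : ∀ β ∈ Φ, ⟪β, β⟫_ℝ = 2
  inner_int : ∀ β ∈ Φ, ∀ γ ∈ Φ, ∃ z : ℤ, ⟪β, γ⟫_ℝ = (z : ℝ)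
  reflect_mem : ∀ β ∈ Φ, ∀ γ ∈ Φ, β - ⟪β, γ⟫_ℝ • γ ∈ Φ
  reduced : ∀ β ∈ Φ, ∀ t : ℝ, t • β ∈ Φ → t = 1 ∨ t = -1
  pos_coeff : ∀ β ∈ Pos, ∃ a : Fin n → ℕ, β = ∑ i, (a i : ℝ) • α i
  ht_alpha : ∀ i, ht (α i) = 1

namespace SLRS

variable {V : Type} [NormedAddCommGroup V] [InnerProductSpace ℝ V] (S : SLRS V)

/-- Adjacency of two nodes of the diagram: `i ∼ j` iff `⟪α i, α j⟫ = -1`. -/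
def adj (i j : Fin S.n) : Prop := ⟪S.α i, S.α j⟫_ℝ = -1

/-- The reflection along a root `δ` (normalized so that `⟪δ, δ⟫ = 2`). -/
def reflRoot (δ : V) : V → V := fun v => v - ⟪v, δ⟫_ℝ • δ

/-- The fundamental reflection `r i`. -/
def refl (i : Fin S.n) : V → V := reflRoot (S.α i)

/-- A set of mutually orthogonal positive roots. -/
def IsOrthoSet (B : Set V) : Prop :=
  B ⊆ S.Pos ∧ ∀ β ∈ B, ∀ γ ∈ B, β ≠ γ → ⟪β, γ⟫_ℝ = 0

/-- The action of a map `w` on a set `B` of positive roots: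
`w·B = Φ⁺ ∩ {± w β : β ∈ B}`. -/
def mapSet (w : V → V) (B : Set V) : Set V :=
  {x ∈ S.Pos | ∃ β ∈ B, w β = x ∨ w β = -x}

/-- The action of the fundamental reflection `r i` on a set of positive roots. -/
def rAct (i : Fin S.n) (B : Set V) : Set V := S.mapSet (S.refl i) B

/-- The action of the reflection along a root `δ` on a set of positive roots. -/
def reflAct (δ : V) (B : Set V) : Set V := S.mapSet (reflRoot δ) B

/-- The `W`-orbit of `B`, `W` being generated by the fundamental reflections. -/
def orbitOf (B : Set V) : Set (Set V) :=
  {C | Relation.ReflTransGen (fun X Y => ∃ i, Y = S.rAct i X) B C}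

/-- `𝓑` is a `W`-orbit of sets of mutually orthogonal positive roots. -/
def IsOrbit (𝓑 : Set (Set V)) : Prop :=
  ∃ B, S.IsOrthoSet B ∧ 𝓑 = S.orbitOf B

/-- Admissibility of a `W`-orbit of sets of mutually orthogonal positive roots. -/
def Admissible (𝓑 : Set (Set V)) : Prop :=
  S.IsOrbit 𝓑 ∧ ∀ B ∈ 𝓑, ∀ i j : Fin S.n, i ≠ j → ¬ S.adj i j →
    (∃ γ, γ ∈ B ∧ γ - S.α i + S.α j ∈ B) → S.rAct i B = S.rAct j B

/-- The height order: `B < C` iff `B ≠ C` and the minimal height of an element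
of `B \ C` is smaller than the minimal height of an element of `C \ B`. -/
def lt (B C : Set V) : Prop :=
  B ≠ C ∧ sInf (⇑S.ht '' (B \ C)) < sInf (⇑S.ht '' (C \ B))

/-- The map `V → V` determined by the word `l = [i₁, …, iₛ]`,
namely `r i₁ ∘ r i₂ ∘ ⋯ ∘ r iₛ`. -/
def wordMap (l : List (Fin S.n)) : V → V := l.foldr (fun i f => S.refl i ∘ f) id

/-- A map belongs to the Weyl group `W` iff it is realized by a word in the
fundamental reflections. -/
def InW (w : V → V) : Prop := ∃ l : List (Fin S.n), S.wordMap l = w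

/-- The Coxeter length of an element of `W`: the minimal length of a word in
the fundamental reflections representing it. -/
noncomputable def len (w : V → V) : ℕ :=
  sInf {k | ∃ l : List (Fin S.n), l.length = k ∧ S.wordMap l = w}

/-- The action of `w ∈ W` on a set of positive roots. -/
def wAct (w : V → V) (B : Set V) : Set V := S.mapSet w B

/-- `r i₁ · (r i₂ · ⋯ (r iₛ · B))` for the word `l = [i₁, …, iₛ]`. -/
def suffixAct (l : List (Fin S.n)) (B : Set V) : Set V := l.foldr S.rAct B

/-- The chain `B > r iₛ · B > r iₛ₋₁ r iₛ · B > ⋯ > r i₁ ⋯ r iₛ · B` obtained by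
successively applying the letters of the word `l = [i₁, …, iₛ]` to `B` is
strictly descending at every step. -/
def DescChain (l : List (Fin S.n)) (B : Set V) : Prop :=
  ∀ k < l.length, S.lt (S.suffixAct (l.drop k) B) (S.suffixAct (l.drop (k + 1)) B)

end SLRS

open SLRS

variable {V : Type} [NormedAddCommGroup V] [InnerProductSpace ℝ V]

namespace SLRS

variable (S : SLRS V)

/-! ### Heights and positivity -/

lemma ht_pos {β : V} (h : β ∈ S.Pos) : 0 < S.ht β := by
  obtain ⟨a, ha⟩ := S.pos_coeff β h
  have h1 : S.ht β = ∑ k, (a k : ℝ) := by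
    rw [ha, map_sum]
    simp [S.ht_alpha]
  have h0 : 0 ≤ S.ht β := by
    rw [h1]; positivity
  refine lt_of_le_of_ne h0 fun h2 => ?_
  rw [h1] at h2
  have h3 := (Finset.sum_eq_zero_iff_of_nonneg (fun k _ => Nat.cast_nonneg (a k))).1 h2.symm
  have h4 : β = 0 := by
    rw [ha]
    exact Finset.sum_eq_zero fun k hk => by rw [h3 k hk, zero_smul]
  have := S.norm_two β (S.pos_subset h)
  rw [h4, inner_zero_left] at this
  norm_num at this

lemma ht_int {β : V} (h : β ∈ S.Φ) : ∃ z : ℤ, S.ht β = z := by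
  have key : ∀ γ ∈ S.Pos, ∃ z : ℤ, S.ht γ = z := by
    intro γ hγ
    obtain ⟨a, ha⟩ := S.pos_coeff γ hγ
    refine ⟨∑ k, (a k : ℤ), ?_⟩
    rw [ha, map_sum]
    simp [S.ht_alpha]
  rcases S.mem_pos_or_neg β h with h | h
  · exact key β h
  · obtain ⟨z, hz⟩ := key _ h
    rw [map_neg] at hz
    exact ⟨-z, by push_cast; linarith⟩

lemma ht_ne_zero {β : V} (h : β ∈ S.Φ) : S.ht β ≠ 0 := by
  rcases S.mem_pos_or_neg β h with h | h
  · exact (S.ht_pos h).ne'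
  · have := S.ht_pos h
    rw [map_neg] at this
    linarith

lemma pos_of_ht {β : V} (h : β ∈ S.Φ) (hh : 0 < S.ht β) : β ∈ S.Pos := by
  rcases S.mem_pos_or_neg β h with h | h
  · exact h
  · have := S.ht_pos h
    rw [map_neg] at this
    linarith

/-- Strict inequalities between heights of roots improve by one, heights being integers. -/
lemma ht_lt {β γ : V} (hβ : β ∈ S.Φ) (hγ : γ ∈ S.Φ) {c : ℤ} (h : S.ht β + c < S.ht γ) :
    S.ht β + c + 1 ≤ S.ht γ := by
  obtain ⟨z, hz⟩ := S.ht_int hβ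
  obtain ⟨w, hw⟩ := S.ht_int hγ
  rw [hz, hw] at h ⊢
  have h' : z + c < w := by exact_mod_cast h
  have h2 : z + c + 1 ≤ w := h'
  exact_mod_cast h2

/-! ### Inner products and reflections of roots -/

lemma alpha_mem (i : Fin S.n) : S.α i ∈ S.Φ := S.pos_subset (S.alpha_pos i)

lemma sub_mem {β γ : V} (hβ : β ∈ S.Φ) (hγ : γ ∈ S.Φ) (h : ⟪β, γ⟫_ℝ = 1) : β - γ ∈ S.Φ := by
  simpa [h] using S.reflect_mem β hβ γ hγ

lemma add_mem {β γ : V} (hβ : β ∈ S.Φ) (hγ : γ ∈ S.Φ) (h : ⟪β, γ⟫_ℝ = -1) : β + γ ∈ S.Φ := by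
  simpa [h] using S.reflect_mem β hβ γ hγ

lemma inner_pos_cases {β γ : V} (hβ : β ∈ S.Pos) (hγ : γ ∈ S.Pos) (hne : β ≠ γ) :
    ⟪β, γ⟫_ℝ = -1 ∨ ⟪β, γ⟫_ℝ = 0 ∨ ⟪β, γ⟫_ℝ = 1 := by
  have b2 := S.norm_two β (S.pos_subset hβ)
  have g2 := S.norm_two γ (S.pos_subset hγ)
  have h1 : 0 < ⟪β - γ, β - γ⟫_ℝ := real_inner_self_pos.2 (sub_ne_zero.2 hne)
  have h2 : 0 < ⟪β + γ, β + γ⟫_ℝ := by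
    refine real_inner_self_pos.2 fun h => S.not_pos_and_neg γ hγ ?_
    rwa [← eq_neg_of_add_eq_zero_left h]
  rw [inner_sub_left, inner_sub_right, inner_sub_right, real_inner_comm β γ, b2, g2] at h1
  rw [inner_add_left, inner_add_right, inner_add_right, real_inner_comm β γ, b2, g2] at h2
  obtain ⟨z, hz⟩ := S.inner_int β (S.pos_subset hβ) γ (S.pos_subset hγ)
  rw [hz] at h1 h2 ⊢
  have h3 : z < 2 := by
    have : (z : ℝ) < 2 := by linarith
    exact_mod_cast this
  have h4 : -2 < z := by
    have : (-2 : ℝ) < z := by linarith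
    exact_mod_cast this
  have h5 : z = -1 ∨ z = 0 ∨ z = 1 := by omega
  rcases h5 with rfl | rfl | rfl <;> simp

lemma refl_apply (i : Fin S.n) (v : V) : S.refl i v = v - ⟪v, S.α i⟫_ℝ • S.α i := rfl

lemma ht_refl (i : Fin S.n) (v : V) : S.ht (S.refl i v) = S.ht v - ⟪v, S.α i⟫_ℝ := by
  simp [refl_apply, S.ht_alpha]

lemma inner_refl_refl (i : Fin S.n) (v w : V) : ⟪S.refl i v, S.refl i w⟫_ℝ = ⟪v, w⟫_ℝ := by
  have := S.norm_two _ (S.alpha_mem i)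
  simp only [refl_apply, inner_sub_left, inner_sub_right, real_inner_smul_left,
    real_inner_smul_right, this, real_inner_comm w (S.α i)]
  ring

lemma refl_refl (i : Fin S.n) (v : V) : S.refl i (S.refl i v) = v := by
  have := S.norm_two _ (S.alpha_mem i)
  simp only [refl_apply, inner_sub_left, real_inner_smul_left, this]
  module

lemma refl_alpha (i : Fin S.n) : S.refl i (S.α i) = -S.α i := by
  rw [refl_apply, S.norm_two _ (S.alpha_mem i)]
  module

/-- `r i` permutes the positive roots other than `α i`. -/
lemma refl_pos {i : Fin S.n} {β : V} (hβ : β ∈ S.Pos) (hne : β ≠ S.α i) :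
    S.refl i β ∈ S.Pos := by
  have hΦ : S.refl i β ∈ S.Φ := S.reflect_mem β (S.pos_subset hβ) _ (S.alpha_mem i)
  have h1 := S.ht_lt (β := β) (γ := S.refl i β) (c := -2) (S.pos_subset hβ) hΦ (by
    rw [ht_refl]
    rcases S.inner_pos_cases hβ (S.alpha_pos i) hne with h | h | h <;> rw [h] <;> push_cast <;> linarith)
  have h2 := S.ht_pos hβ
  have h3 := S.ht_ne_zero hΦ
  refine S.pos_of_ht hΦ (lt_of_le_of_ne ?_ h3.symm)
  have h4 : (1 : ℝ) ≤ S.ht β := by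
    obtain ⟨z, hz⟩ := S.ht_int (S.pos_subset hβ)
    rw [hz] at h2 ⊢
    have : 0 < z := by exact_mod_cast h2
    exact_mod_cast this
  push_cast at h1
  linarith

/-! ### The action on orthogonal sets -/

lemma IsOrthoSet.rAct {S : SLRS V} {B : Set V} (hB : S.IsOrthoSet B) (i : Fin S.n) :
    S.IsOrthoSet (S.rAct i B) := by
  refine ⟨fun x hx => hx.1, ?_⟩
  rintro x ⟨hx, β, hβ, h1⟩ y ⟨hy, γ, hγ, h2⟩ hne
  have h3 : β ≠ γ := by
    rintro rfl
    rcases h1 with h1 | h1 <;> rcases h2 with h2 | h2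
    · exact hne (h1.symm.trans h2)
    · exact S.not_pos_and_neg y hy (by rwa [← h2, h1])
    · exact S.not_pos_and_neg x hx (by rwa [← h1, h2])
    · exact hne (neg_injective (h1.symm.trans h2))
  have h4 := S.inner_refl_refl i β γ
  rw [hB.2 β hβ γ hγ h3] at h4
  rcases h1 with h1 | h1 <;> rcases h2 with h2 | h2 <;> simpa [h1, h2] using h4

lemma isOrthoSet_of_mem_orbit {𝓑 : Set (Set V)} (h : S.IsOrbit 𝓑) {B : Set V} (hB : B ∈ 𝓑) :
    S.IsOrthoSet B := by
  obtain ⟨B₀, h0, rfl⟩ := h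
  change Relation.ReflTransGen _ B₀ B at hB
  induction hB with
  | refl => exact h0
  | tail _ h ih =>
    obtain ⟨i, rfl⟩ := h
    exact ih.rAct i

lemma rAct_eq_self {B : Set V} (hB : S.IsOrthoSet B) {i : Fin S.n} (hi : S.α i ∈ B) :
    S.rAct i B = B := by
  have fix : ∀ β ∈ B, β ≠ S.α i → S.refl i β = β := by
    intro β hβ hne
    rw [refl_apply, hB.2 β hβ _ hi hne, zero_smul, sub_zero]
  ext x
  constructor
  · rintro ⟨hx, β, hβ, h⟩
    by_cases hne : β = S.α i
    · subst hne
      change S.refl i _ = _ ∨ S.refl i _ = _ at h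
      rw [refl_alpha] at h
      rcases h with h | h
      · exact absurd (h ▸ hx) (S.not_pos_and_neg _ (S.alpha_pos i))
      · rwa [← neg_injective h]
    · change S.refl i _ = _ ∨ S.refl i _ = _ at h
      rw [fix β hβ hne] at h
      rcases h with h | h
      · rwa [← h]
      · exact absurd (h ▸ hB.1 hβ) (S.not_pos_and_neg _ hx)
  · intro hx
    refine ⟨hB.1 hx, x, hx, ?_⟩
    by_cases hne : x = S.α i
    · right
      rw [hne]
      exact S.refl_alpha i
    · exact Or.inl (fix x hx hne)

lemma rAct_eq_image {B : Set V} (hB : S.IsOrthoSet B) {i : Fin S.n} (hi : S.α i ∉ B) :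
    S.rAct i B = S.refl i '' B := by
  have hp : ∀ β ∈ B, S.refl i β ∈ S.Pos := fun β hβ =>
    S.refl_pos (hB.1 hβ) fun h => hi (h ▸ hβ)
  ext x
  constructor
  · rintro ⟨hx, β, hβ, h | h⟩
    · exact ⟨β, hβ, h⟩
    · change S.refl i β = -x at h
      exact absurd (h ▸ hp β hβ) (S.not_pos_and_neg _ hx)
  · rintro ⟨β, hβ, rfl⟩
    exact ⟨hp β hβ, β, hβ, Or.inl rfl⟩

/-! ### The raising criterion -/

/-- `r i` raises `B` iff a raised element of `B` lies at least two below all lowered ones. -/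
lemma lt_rAct_iff {B : Set V} (hB : S.IsOrthoSet B) (i : Fin S.n) :
    S.lt B (S.rAct i B) ↔ S.α i ∉ B ∧ ∃ x ∈ B, ⟪x, S.α i⟫_ℝ = -1 ∧
      ∀ β ∈ B, ⟪β, S.α i⟫_ℝ = 1 → S.ht x + 2 ≤ S.ht β := by
  by_cases hi : S.α i ∈ B
  · simp [rAct_eq_self S hB hi, lt, hi]
  rw [rAct_eq_image S hB hi]
  have hΦ : ∀ β ∈ B, β ∈ S.Φ := fun β hβ => S.pos_subset (hB.1 hβ)
  have cases3 : ∀ β ∈ B, ⟪β, S.α i⟫_ℝ = -1 ∨ ⟪β, S.α i⟫_ℝ = 0 ∨ ⟪β, S.α i⟫_ℝ = 1 :=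
    fun β hβ => S.inner_pos_cases (hB.1 hβ) (S.alpha_pos i) fun h => hi (h ▸ hβ)
  have fin : B.Finite := S.finite.subset hΦ
  -- The image of a moved element is neither equal nor orthogonal to it, so it is not in `B`.
  have moved : ∀ β ∈ B, ⟪β, S.α i⟫_ℝ ≠ 0 → S.refl i β ∉ B := by
    intro β hβ h hmem
    have h1 : β ≠ S.refl i β := by
      intro he
      rw [refl_apply] at he
      have h2 : ⟪β, S.α i⟫_ℝ • S.α i = 0 := by
        rw [eq_comm, sub_eq_self] at he
        exact he
      have h3 := S.norm_two _ (S.alpha_mem i)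
      rcases smul_eq_zero.1 h2 with h2 | h2
      · exact h h2
      · rw [h2, inner_zero_left] at h3
        norm_num at h3
    have h2 := hB.2 β hβ _ hmem h1
    rw [refl_apply, inner_sub_right, real_inner_smul_right, S.norm_two β (hΦ β hβ)] at h2
    rcases cases3 β hβ with h3 | h3 | h3
    · rw [h3] at h2; norm_num at h2
    · exact h h3
    · rw [h3] at h2; norm_num at h2
  have fixed : ∀ β, ⟪β, S.α i⟫_ℝ = 0 → S.refl i β = β := by
    intro β h
    rw [refl_apply, h, zero_smul, sub_zero]
  have D1 : B \ S.refl i '' B = {β ∈ B | ⟪β, S.α i⟫_ℝ ≠ 0} := by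
    ext x
    constructor
    · rintro ⟨hx, hn⟩
      exact ⟨hx, fun h => hn ⟨x, hx, fixed x h⟩⟩
    · rintro ⟨hx, hn⟩
      refine ⟨hx, ?_⟩
      rintro ⟨β, hβ, rfl⟩
      exact moved _ hx hn (by rwa [refl_refl])
  have D2 : (S.refl i '' B) \ B = S.refl i '' {β ∈ B | ⟪β, S.α i⟫_ℝ ≠ 0} := by
    ext x
    constructor
    · rintro ⟨⟨β, hβ, rfl⟩, hn⟩
      refine ⟨β, ⟨hβ, fun h => hn ?_⟩, rfl⟩
      rwa [fixed β h]
    · rintro ⟨β, ⟨hβ, hn⟩, rfl⟩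
      exact ⟨⟨β, hβ, rfl⟩, moved β hβ hn⟩
  have finM : {β ∈ B | ⟪β, S.α i⟫_ℝ ≠ 0}.Finite := fin.subset fun x hx => hx.1
  have fin1 := finM.image S.ht
  have fin2 := (finM.image (S.refl i)).image S.ht
  unfold lt
  rw [D1, D2]
  constructor
  · rintro ⟨hne, hlt⟩
    refine ⟨hi, ?_⟩
    have hM : {β ∈ B | ⟪β, S.α i⟫_ℝ ≠ 0}.Nonempty := by
      by_contra hem
      rw [Set.not_nonempty_iff_eq_empty] at hem
      rw [hem, Set.image_empty] at D2
      rw [hem] at D1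
      exact hne (Set.Subset.antisymm (Set.sdiff_eq_empty.1 D1) (Set.sdiff_eq_empty.1 D2))
    obtain ⟨x, ⟨hx, hx0⟩, hxe⟩ := (hM.image S.ht).csInf_mem fin1
    have low : ∀ β ∈ B, ⟪β, S.α i⟫_ℝ ≠ 0 → S.ht x < S.ht (S.refl i β) := by
      intro β hβ h
      rw [hxe]
      exact hlt.trans_le (csInf_le fin2.bddBelow ⟨_, ⟨β, ⟨hβ, h⟩, rfl⟩, rfl⟩)
    refine ⟨x, hx, ?_, ?_⟩
    · have h1 := low x hx hx0
      rw [ht_refl] at h1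
      rcases cases3 x hx with h | h | h
      · exact h
      · exact absurd h hx0
      · rw [h] at h1; linarith
    · intro β hβ h
      have h1 := low β hβ (by rw [h]; exact one_ne_zero)
      rw [ht_refl, h] at h1
      have := S.ht_lt (hΦ x hx) (hΦ β hβ) (c := 1) (by push_cast; linarith)
      push_cast at this
      linarith
  · rintro ⟨-, x, hx, hx1, hlow⟩
    have hxM : x ∈ {β ∈ B | ⟪β, S.α i⟫_ℝ ≠ 0} := ⟨hx, by rw [hx1]; norm_num⟩
    constructor
    · intro he
      rw [← D1, ← he] at hxM
      exact hxM.2 hxM.1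
    · obtain ⟨_, ⟨β, ⟨hβ, hβ0⟩, rfl⟩, he⟩ :=
        (((Set.nonempty_of_mem hxM).image (S.refl i)).image S.ht).csInf_mem fin2
      rw [← he, ht_refl]
      rcases cases3 β hβ with h | h | h
      · have := csInf_le fin1.bddBelow ⟨β, ⟨hβ, hβ0⟩, rfl⟩
        rw [h]; linarith
      · exact absurd h hβ0
      · have h1 := csInf_le fin1.bddBelow ⟨x, hxM, rfl⟩
        have h2 := hlow β hβ h
        rw [h]; linarith

/-! ### Adjacent nodes -/

lemma adj.symm {S : SLRS V} {i j : Fin S.n} (h : S.adj i j) : S.adj j i := by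
  unfold adj at *
  rwa [real_inner_comm]

/-- For orthogonal roots `x`, `β` of types `(-1, 0)` and `(1, 0)` with respect to adjacent nodes
`i`, `j`, the heights differ by none of `1, 2, 3`. -/
lemma ht_gap {i j : Fin S.n} (hij : S.adj i j) {x β : V} (hx : x ∈ S.Φ) (hβ : β ∈ S.Φ)
    (h0 : ⟪x, β⟫_ℝ = 0) (xi : ⟪x, S.α i⟫_ℝ = -1) (xj : ⟪x, S.α j⟫_ℝ = 0)
    (bi : ⟪β, S.α i⟫_ℝ = 1) (bj : ⟪β, S.α j⟫_ℝ = 0) (h : S.ht x + 2 ≤ S.ht β) :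
    S.ht x + 4 ≤ S.ht β := by
  have hji : ⟪S.α j, S.α i⟫_ℝ = -1 := hij.symm
  have hij' : ⟪S.α i, S.α j⟫_ℝ = -1 := hij
  have hii := S.norm_two _ (S.alpha_mem i)
  have hjj := S.norm_two _ (S.alpha_mem j)
  have e1 : β - (x + S.α i) ∈ S.Φ := by
    refine S.sub_mem hβ (S.add_mem hx (S.alpha_mem i) xi) ?_
    rw [inner_add_right, real_inner_comm, h0, bi, zero_add]
  have e2 : β - (x + S.α i) - S.α j ∈ S.Φ := by
    refine S.sub_mem e1 (S.alpha_mem j) ?_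
    rw [inner_sub_left, inner_add_left, bj, xj, hij']; norm_num
  have e3 : β - (x + S.α i) - S.α j - S.α i ∈ S.Φ := by
    refine S.sub_mem e2 (S.alpha_mem i) ?_
    rw [inner_sub_left, inner_sub_left, inner_add_left, bi, xi, hii, hji]; norm_num
  have n2 := S.ht_ne_zero e2
  have n3 := S.ht_ne_zero e3
  simp only [map_sub, map_add, S.ht_alpha] at n2 n3
  have l2 : S.ht x + (2 : ℤ) + 1 ≤ S.ht β := S.ht_lt hx hβ (lt_of_le_of_ne (by exact_mod_cast h) (by
    intro hh; apply n2; push_cast at hh; linarith))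
  have l3 : S.ht x + (3 : ℤ) + 1 ≤ S.ht β := S.ht_lt hx hβ (lt_of_le_of_ne
    (by push_cast at l2 ⊢; linarith) (by intro hh; apply n3; push_cast at hh; linarith))
  push_cast at l3
  linarith

/-- A set raised by `r i` does not contain `α i + α j`. -/
lemma add_notMem {B : Set V} (hB : S.IsOrthoSet B) {i j : Fin S.n} (hij : S.adj i j)
    (hi : S.lt B (S.rAct i B)) : S.α i + S.α j ∉ B := by
  intro h
  obtain ⟨-, x, hx, -, hlow⟩ := (S.lt_rAct_iff hB i).1 hi
  have h1 := hlow _ h (by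
    rw [inner_add_left, S.norm_two _ (S.alpha_mem i), show ⟪S.α j, S.α i⟫_ℝ = -1 from hij.symm]
    norm_num)
  rw [map_add, S.ht_alpha, S.ht_alpha] at h1
  have := S.ht_pos (hB.1 hx)
  linarith

lemma inner_refl_adj {i j : Fin S.n} (hij : S.adj i j) (v : V) :
    ⟪S.refl i v, S.α j⟫_ℝ = ⟪v, S.α i⟫_ℝ + ⟪v, S.α j⟫_ℝ := by
  rw [refl_apply, inner_sub_left, real_inner_smul_left, show ⟪S.α i, S.α j⟫_ℝ = -1 from hij]
  ring

/-- The chain `r i · B < r j r i · B < r i r j r i · B`. Both steps are read off from `B`: the pairings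
deciding them are `⟪β, α i + α j⟫` and `⟪β, α j⟫`, with heights corrected by the reflections already
applied. -/
lemma raise_raise_half {B : Set V} (hB : S.IsOrthoSet B) {i j : Fin S.n} (hij : S.adj i j)
    (hi : S.lt B (S.rAct i B)) (hj : S.lt B (S.rAct j B)) :
    S.lt (S.rAct i B) (S.rAct j (S.rAct i B)) ∧
      S.lt (S.rAct j (S.rAct i B)) (S.rAct i (S.rAct j (S.rAct i B))) := by
  have hadd := S.add_notMem hB hij hi
  obtain ⟨ni, x, hx, xi, xlow⟩ := (S.lt_rAct_iff hB i).1 hi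
  obtain ⟨nj, y, hy, yj, ylow⟩ := (S.lt_rAct_iff hB j).1 hj
  have hΦ : ∀ β ∈ B, β ∈ S.Φ := fun β hβ => S.pos_subset (hB.1 hβ)
  have hsum : S.α i + S.α j ∈ S.Pos :=
    S.pos_of_ht (S.add_mem (S.alpha_mem i) (S.alpha_mem j) hij)
      (by rw [map_add, S.ht_alpha, S.ht_alpha]; norm_num)
  have ci : ∀ β ∈ B, ⟪β, S.α i⟫_ℝ = -1 ∨ ⟪β, S.α i⟫_ℝ = 0 ∨ ⟪β, S.α i⟫_ℝ = 1 :=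
    fun β hβ => S.inner_pos_cases (hB.1 hβ) (S.alpha_pos i) fun h => ni (h ▸ hβ)
  have cj : ∀ β ∈ B, ⟪β, S.α j⟫_ℝ = -1 ∨ ⟪β, S.α j⟫_ℝ = 0 ∨ ⟪β, S.α j⟫_ℝ = 1 :=
    fun β hβ => S.inner_pos_cases (hB.1 hβ) (S.alpha_pos j) fun h => nj (h ▸ hβ)
  have cs : ∀ β ∈ B, ⟪β, S.α i⟫_ℝ + ⟪β, S.α j⟫_ℝ = -1 ∨ ⟪β, S.α i⟫_ℝ + ⟪β, S.α j⟫_ℝ = 0 ∨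
      ⟪β, S.α i⟫_ℝ + ⟪β, S.α j⟫_ℝ = 1 := by
    intro β hβ
    rw [← inner_add_right]
    exact S.inner_pos_cases (hB.1 hβ) hsum fun h => hadd (h ▸ hβ)
  have ortho : ∀ u ∈ B, ∀ v ∈ B, ∀ w, ⟪u, w⟫_ℝ = -1 → ⟪v, w⟫_ℝ = 1 → ⟪u, v⟫_ℝ = 0 := by
    intro u hu v hv w h1 h2
    refine hB.2 u hu v hv ?_
    rintro rfl
    rw [h1] at h2
    norm_num at h2
  have gapi : ⟪x, S.α j⟫_ℝ = 0 → ∀ β ∈ B, ⟪β, S.α i⟫_ℝ = 1 → ⟪β, S.α j⟫_ℝ = 0 →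
      S.ht x + 4 ≤ S.ht β := fun xj β hβ bi bj =>
    S.ht_gap hij (hΦ x hx) (hΦ β hβ) (ortho x hx β hβ _ xi bi) xi xj bi bj (xlow β hβ bi)
  have gapj : ⟪y, S.α i⟫_ℝ = 0 → ∀ β ∈ B, ⟪β, S.α j⟫_ℝ = 1 → ⟪β, S.α i⟫_ℝ = 0 →
      S.ht y + 4 ≤ S.ht β := fun yi β hβ bj bi =>
    S.ht_gap hij.symm (hΦ y hy) (hΦ β hβ) (ortho y hy β hβ _ yj bj) yj yi bj bi (ylow β hβ bj)
  -- `x` has type `(-1, 0)` or `(-1, 1)`, and `y` has type `(0, -1)` or `(1, -1)`.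
  have tx : ⟪x, S.α j⟫_ℝ = 0 ∨ ⟪x, S.α j⟫_ℝ = 1 := by
    rcases cj x hx with h | h | h
    · have := cs x hx
      rw [xi, h] at this
      norm_num at this
    · exact Or.inl h
    · exact Or.inr h
  have ty : ⟪y, S.α i⟫_ℝ = 0 ∨ ⟪y, S.α i⟫_ℝ = 1 := by
    rcases ci y hy with h | h | h
    · have := cs y hy
      rw [yj, h] at this
      norm_num at this
    · exact Or.inl h
    · exact Or.inr h
  have hC : S.IsOrthoSet (S.rAct i B) := hB.rAct i
  have eC := S.rAct_eq_image hB ni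
  have njC : S.α j ∉ S.rAct i B := by
    rw [eC]
    rintro ⟨β, hβ, h⟩
    apply hadd
    have h1 := S.refl_refl i β
    rw [h, refl_apply, show ⟪S.α j, S.α i⟫_ℝ = -1 from hij.symm] at h1
    convert hβ using 1
    rw [← h1]
    module
  have eD := S.rAct_eq_image hC njC
  have niD : S.α i ∉ S.rAct j (S.rAct i B) := by
    rw [eD, eC]
    rintro ⟨_, ⟨β, hβ, rfl⟩, h⟩
    apply nj
    have h1 := S.refl_refl j (S.refl i β)
    rw [h, refl_apply, show ⟪S.α i, S.α j⟫_ℝ = -1 from hij] at h1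
    have h2 := S.refl_refl i β
    rw [← h1, refl_apply, inner_sub_left, real_inner_smul_left, S.norm_two _ (S.alpha_mem i),
      show ⟪S.α j, S.α i⟫_ℝ = -1 from hij.symm] at h2
    convert hβ using 1
    rw [← h2]
    module
  have q2 : ∀ v, ⟪S.refl j (S.refl i v), S.α i⟫_ℝ = ⟪v, S.α j⟫_ℝ := by
    intro v
    rw [S.inner_refl_adj hij.symm, S.inner_refl_adj hij, refl_apply, inner_sub_left,
      real_inner_smul_left, S.norm_two _ (S.alpha_mem i)]
    ring
  have ht2 : ∀ v, S.ht (S.refl j (S.refl i v)) =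
      S.ht v - 2 * ⟪v, S.α i⟫_ℝ - ⟪v, S.α j⟫_ℝ := by
    intro v
    rw [ht_refl, ht_refl, S.inner_refl_adj hij]
    ring
  constructor
  · rw [S.lt_rAct_iff hC]
    refine ⟨njC, ?_⟩
    rw [eC]
    simp only [Set.exists_mem_image, Set.forall_mem_image, S.inner_refl_adj hij, ht_refl]
    -- Of the candidates of type `(-1, 0)` and `(0, -1)`, the one of lower new height is a witness.
    have use_x : ⟪x, S.α j⟫_ℝ = 0 → S.ht x + 1 ≤ S.ht y → ∃ z ∈ B,
        ⟪z, S.α i⟫_ℝ + ⟪z, S.α j⟫_ℝ = -1 ∧ ∀ β ∈ B, ⟪β, S.α i⟫_ℝ + ⟪β, S.α j⟫_ℝ = 1 →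
          S.ht z - ⟪z, S.α i⟫_ℝ + 2 ≤ S.ht β - ⟪β, S.α i⟫_ℝ := by
      intro xj hxy
      refine ⟨x, hx, by rw [xi, xj]; norm_num, fun β hβ hs => ?_⟩
      rcases ci β hβ with bi | bi | bi
      · rcases cj β hβ with h | h | h <;> rw [bi, h] at hs <;> norm_num at hs
      · have := ylow β hβ (by linarith)
        rw [xi, bi]; linarith
      · have := gapi xj β hβ bi (by linarith)
        rw [xi, bi]; linarith
    have use_y : ⟪y, S.α i⟫_ℝ = 0 → S.ht y ≤ S.ht x → ∃ z ∈ B,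
        ⟪z, S.α i⟫_ℝ + ⟪z, S.α j⟫_ℝ = -1 ∧ ∀ β ∈ B, ⟪β, S.α i⟫_ℝ + ⟪β, S.α j⟫_ℝ = 1 →
          S.ht z - ⟪z, S.α i⟫_ℝ + 2 ≤ S.ht β - ⟪β, S.α i⟫_ℝ := by
      intro yi hyx
      refine ⟨y, hy, by rw [yi, yj]; norm_num, fun β hβ hs => ?_⟩
      rcases ci β hβ with bi | bi | bi
      · rcases cj β hβ with h | h | h <;> rw [bi, h] at hs <;> norm_num at hs
      · have := ylow β hβ (by linarith)
        rw [yi, bi]; linarith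
      · have : S.ht y + 3 ≤ S.ht β := by
          rcases tx with xj | xj
          · linarith [gapi xj β hβ bi (by linarith)]
          · linarith [xlow β hβ bi, ylow x hx xj]
        rw [yi, bi]; linarith
    rcases tx with xj | xj <;> rcases ty with yi | yi
    · rcases le_or_gt (S.ht y) (S.ht x) with h | h
      · exact use_y yi h
      · have := S.ht_lt (hΦ x hx) (hΦ y hy) (c := 0) (by simpa using h)
        exact use_x xj (by simpa using this)
    · exact use_x xj (by linarith [xlow y hy yi])
    · exact use_y yi (by linarith [ylow x hx xj])
    · linarith [xlow y hy yi, ylow x hx xj]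
  · rw [S.lt_rAct_iff (hC.rAct j)]
    refine ⟨niD, ?_⟩
    rw [eD, eC]
    simp only [Set.exists_mem_image, Set.forall_mem_image, q2, ht2]
    refine ⟨y, hy, yj, fun β hβ bj => ?_⟩
    have h1 := ylow β hβ bj
    have hb : ⟪β, S.α i⟫_ℝ = -1 ∨ ⟪β, S.α i⟫_ℝ = 0 := by
      rcases ci β hβ with h | h | h
      · exact Or.inl h
      · exact Or.inr h
      · have := cs β hβ
        rw [h, bj] at this
        norm_num at this
    rcases ty with yi | yi <;> rcases hb with bi | bi <;> rw [yi, yj, bi, bj]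
    · linarith
    · linarith [gapj yi β hβ bj bi]
    · linarith
    · linarith

end SLRS

/-- Lemma 3.4(iii): for `𝓑` admissible, `B ∈ 𝓑`, nodes
`i ∼ j`: if `B < r i · B` and `B < r j · B`, then
`r i · B < r j r i · B < r i r j r i · B` and
`r j · B < r i r j · B < r j r i r j · B`. -/
theorem raise_raise_adjacent (S : SLRS V) (𝓑 : Set (Set V))
    (hadm : S.Admissible 𝓑) (B : Set V) (hB : B ∈ 𝓑) (i j : Fin S.n)
    (hij : S.adj i j)
    (hi : S.lt B (S.rAct i B)) (hj : S.lt B (S.rAct j B)) :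
    (S.lt (S.rAct i B) (S.rAct j (S.rAct i B)) ∧
     S.lt (S.rAct j (S.rAct i B)) (S.rAct i (S.rAct j (S.rAct i B)))) ∧
    (S.lt (S.rAct j B) (S.rAct i (S.rAct j B)) ∧
     S.lt (S.rAct i (S.rAct j B)) (S.rAct j (S.rAct i (S.rAct j B)))) := by
  have hO := S.isOrthoSet_of_mem_orbit hadm.1 hB
  exact ⟨S.raise_raise_half hO hij hi hj, S.raise_raise_half hO hij.symm hj hi⟩
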